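/- arXiv:2011.03033 — 4 statements merged into one kernel-verified Lean document; each statement's English description precedes it below -/
import Mathlib

section
/- Let D be a symmetric cycle in the hypercube graph H(t,2) and let T be any vertex of {1,-1}^t. Then there exists a unique row vector x = (x_1,...,x_t) in {-1,0,1}^t such that T = sum_{i in [t]} x_i * D^{i-1}. Moreover, the set Q(T,D) := { x_i * D^{i-1} : x_i != 0 } is the unique inclusion-minimal subset of the vertex sequence V(D) whose members sum to T in R^t; its cardinality is odd; and sum_{Q in Q(T,D)} <T,Q> = t. -/
open Finset

noncomputable section

/-- Row vectors of `ℝ^t`. -/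
abbrev Vec (t : ℕ) := Fin t → ℝ

/-- `T` is a vertex of the discrete hypercube `{1,-1}^t`. -/
def IsPMVertex {t : ℕ} (T : Vec t) : Prop := ∀ i, T i = 1 ∨ T i = -1

/-- `T` is a vertex of the discrete hypercube `{0,1}^t`. -/
def Is01Vertex {t : ℕ} (T : Vec t) : Prop := ∀ i, T i = 0 ∨ T i = 1

open Classical in
/-- Hamming distance between two vectors. -/
def hamming {t : ℕ} (X Y : Vec t) : ℕ :=
  (Finset.univ.filter fun i => X i ≠ Y i).card

/-- The standard scalar product on `ℝ^t`. -/
def sprod {t : ℕ} (X Y : Vec t) : ℝ := ∑ i, X i * Y i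

open Classical in
/-- The cardinality of the negative part `T⁻ = {e : T e = -1}` of `T`. -/
def negCard {t : ℕ} (T : Vec t) : ℕ :=
  (Finset.univ.filter fun i => T i = -1).card

open Classical in
/-- The Hamming weight (number of coordinates equal to `1`) of a `0/1`-vector. -/
def hwt01 {t : ℕ} (T : Vec t) : ℕ :=
  (Finset.univ.filter fun i => T i = 1).card

/-- `D` (read as a `2t`-periodic sequence `D^0, D^1, …`) is a symmetric cycle in the
hypercube graph `H(t,2)` on the vertex set `{1,-1}^t`: all `D^k` are vertices,
consecutive members are adjacent (Hamming distance `1`), the `2t` members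
`D^0, …, D^{2t-1}` are pairwise distinct, and `D^{k+t} = -D^k` for `0 ≤ k ≤ t-1`. -/
structure IsSymCycle (t : ℕ) (D : ℕ → Vec t) : Prop where
  vertex : ∀ k, IsPMVertex (D k)
  periodic : ∀ k, D (k + 2 * t) = D k
  adj : ∀ k, hamming (D k) (D (k + 1)) = 1
  inj : ∀ k l, k < 2 * t → l < 2 * t → D k = D l → k = l
  symm : ∀ k, k ≤ t - 1 → D (k + t) = -(D k)

/-- `D` is a symmetric cycle in the hypercube graph on the vertex set `{0,1}^t`:
here `D^{k+t} = (1,…,1) - D^k` for `0 ≤ k ≤ t-1`. -/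
structure IsSymCycle01 (t : ℕ) (D : ℕ → Vec t) : Prop where
  vertex : ∀ k, Is01Vertex (D k)
  periodic : ∀ k, D (k + 2 * t) = D k
  adj : ∀ k, hamming (D k) (D (k + 1)) = 1
  inj : ∀ k l, k < 2 * t → l < 2 * t → D k = D l → k = l
  symm : ∀ k, k ≤ t - 1 → D (k + t) = (fun _ => 1) - D k

open Classical in
/-- The vertex sequence `V(D) = (D^0, …, D^{2t-1})` of a cycle, as a finset. -/
def VD (t : ℕ) (D : ℕ → Vec t) : Finset (Vec t) :=
  (Finset.range (2 * t)).image D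

/-- `Q` is an inclusion-minimal subset of `V(D)` whose members sum to `T` (in `ℝ^t`). -/
def IsMinDecomp (t : ℕ) (D : ℕ → Vec t) (T : Vec t) (Q : Finset (Vec t)) : Prop :=
  Q ⊆ VD t D ∧ (∑ q ∈ Q, q) = T ∧
    ∀ Q' : Finset (Vec t), Q' ⊆ VD t D → (∑ q ∈ Q', q) = T → ¬Q' ⊂ Q

/-- The vertex `T_S ∈ {1,-1}^t` whose negative part is `S`. -/
def topeOf (t : ℕ) (S : Finset (Fin t)) : Vec t := fun i => if i ∈ S then -1 else 1

/-- `x` is a coordinate vector of `T` w.r.t. `(D^0, …, D^{t-1})` with all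
components in `{-1,0,1}`; by uniqueness this is the vector `x(T,D)`. -/
def IsXVec (t : ℕ) (D : ℕ → Vec t) (T : Vec t) (x : Fin t → ℝ) : Prop :=
  (∀ i, x i = -1 ∨ x i = 0 ∨ x i = 1) ∧ T = ∑ i : Fin t, x i • D (i : ℕ)

open Classical in
/-- The `{0,1}`-decomposition equation
`T = -(|Q|-1)/2 • (1,…,1) + ∑_{q ∈ Q, q ≠ 0} q`. -/
def Decomp01 (t : ℕ) (T : Vec t) (Q : Finset (Vec t)) : Prop :=
  T = (-(((Q.card : ℝ) - 1) / 2)) • (fun _ => 1 : Vec t) +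
    ∑ q ∈ Q.filter (fun q => q ≠ (0 : Vec t)), q

/-- `R^k` for `0 ≤ k ≤ t-1`: the all-ones vector with the first `k` coordinates negated. -/
def Rvec (t : ℕ) (k : ℕ) : Vec t := fun i => if (i : ℕ) < k then -1 else 1

/-- The distinguished symmetric cycle `R` in `H(t,2)`:
`R^0 = (1,…,1)`, `R^s = {}_{-[s]}R^0` for `1 ≤ s ≤ t-1`, and `R^{k+t} = -R^k`. -/
def Rcyc (t : ℕ) (k : ℕ) : Vec t :=
  if k % (2 * t) < t then Rvec t (k % (2 * t)) else -(Rvec t (k % (2 * t) - t))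

/-- `q(A) = ℓ`: an (automatically, the unique) inclusion-minimal subset of `V(R)`
summing to `T_A` has cardinality `ℓ`. -/
def qIs (t : ℕ) (A : Finset (Fin t)) (ℓ : ℕ) : Prop :=
  ∃ Q : Finset (Vec t), IsMinDecomp t (Rcyc t) (topeOf t A) Q ∧ Q.card = ℓ

/-- `c(m;n) = binom(n-1, m-1)`, the number of compositions of `n` into `m` positive
parts (zero whenever `m = 0` or `n ≤ 0`). -/
def comp (m : ℕ) (n : ℤ) : ℕ :=
  if 1 ≤ m ∧ 1 ≤ n then ((n - 1).toNat).choose (m - 1) else 0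

/-- The number of ternary Smirnov words (words with no two equal adjacent letters)
over the alphabet `(θ, α, β) = (0, 1, 2)` with Parikh vector `(k, i, j)`
(that is, `k` letters `θ`, `i` letters `α`, `j` letters `β`), starting with the
letter `s'` and ending with the letter `s''`. -/
def Tm (s' s'' : Fin 3) (k i j : ℕ) : ℕ :=
  Set.ncard { w : List (Fin 3) | List.Chain' (· ≠ ·) w ∧
    w.count 0 = k ∧ w.count 1 = i ∧ w.count 2 = j ∧
    w.head? = some s' ∧ w.getLast? = some s'' }

/-- The number of Smirnov words over the alphabet `(θ, α, β, γ) = (0, 1, 2, 3)` with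
Parikh vector `(k, i, j, h)`, starting with `s'` and ending with `s''`. -/
def Fr (s' s'' : Fin 4) (k i j h : ℕ) : ℕ :=
  Set.ncard { w : List (Fin 4) | List.Chain' (· ≠ ·) w ∧
    w.count 0 = k ∧ w.count 1 = i ∧ w.count 2 = j ∧ w.count 3 = h ∧
    w.head? = some s' ∧ w.getLast? = some s'' }

/-!
Each edge `D^k D^{k+1}` flips one coordinate, and `∑_{k<t} (D^k - D^{k+1}) = D^0 - D^t = 2 D^0` has
no zero entry, so the first `t` edges flip every coordinate exactly once. Hence every `T` is
`∑_{k<t} a_k (D^k - D^{k+1})`, where `a_k = T(c) D^k(c) / 2` for the coordinate `c` flipped by the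
`k`-th edge. Since `D^t = -D^0`, summation by parts turns this into a combination of
`D^0, …, D^{t-1}` with coefficients `a_k - a_{k-1}`, where `a_{-1} = -a_{t-1}`. Thus these vectors
form a basis, and if `T` has entries `±1` then each `a_k` is `±1/2` and the coefficients lie in
`{-1,0,1}`.

A subset `Q` of `V(D)` sums to `∑ ([D^i ∈ Q] - [-D^i ∈ Q]) D^i`, so the coordinates of its sum
force `x_i D^i ∈ Q` whenever `x_i ≠ 0`. In any fixed coordinate, these terms are signs that sum to a
sign, so their number is odd.
-/

section Sums

variable {ι R M : Type*} [Ring R]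

theorem sum_range_smul_sub_succ [AddCommGroup M] [Module R M] {n : ℕ} {b : ℕ → R} {v : ℕ → M}
    (h : b n • v n = b 0 • v 0) :
    ∑ k ∈ range n, b (k + 1) • (v k - v (k + 1)) = ∑ k ∈ range n, (b (k + 1) - b k) • v k := by
  have shift : ∑ k ∈ range n, b (k + 1) • v (k + 1) = ∑ k ∈ range n, b k • v k := by
    have := (sum_range_succ' (fun k => b k • v k) n).symm.trans (sum_range_succ _ n)
    rwa [h, add_left_inj] at this
  simp only [smul_sub, sub_smul, sum_sub_distrib, shift]

theorem sum_eq_card_sub_two_mul_card [DecidableEq R] {s : Finset ι} {f : ι → R}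
    (hf : ∀ i ∈ s, f i = 1 ∨ f i = -1) :
    ∑ i ∈ s, f i = #s - 2 * #{i ∈ s | f i = -1} := by
  have indicator : ∀ i ∈ s, f i = 1 - 2 * if f i = -1 then 1 else 0 := by
    intro i hi
    split_ifs with h
    · rw [h]; norm_num
    · simpa [h] using hf i hi
  rw [sum_congr rfl indicator, sum_sub_distrib, ← mul_sum]
  simp

theorem odd_card_of_sum_eq_one_or_neg_one [CharZero R] {s : Finset ι} {f : ι → R}
    (hf : ∀ i ∈ s, f i = 1 ∨ f i = -1) (hs : ∑ i ∈ s, f i = 1 ∨ ∑ i ∈ s, f i = -1) :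
    Odd #s := by
  classical
  rw [sum_eq_card_sub_two_mul_card hf] at hs
  generalize #{i ∈ s | f i = -1} = m at hs
  have hs' : (#s : ℤ) - 2 * m = 1 ∨ (#s : ℤ) - 2 * m = -1 := by exact_mod_cast hs
  rw [Nat.odd_iff]
  omega

end Sums

variable {t : ℕ} {D : ℕ → Vec t} {T X Y : Vec t} {x : Fin t → ℝ} {Q : Finset (Vec t)}

theorem sprod_sum (s : Finset (Vec t)) : sprod T (∑ q ∈ s, q) = ∑ q ∈ s, sprod T q :=
  dotProduct_sum T s id

namespace IsPMVertex

theorem mul_self (hT : IsPMVertex T) (i : Fin t) : T i * T i = 1 :=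
  mul_self_eq_one_iff.2 (hT i)

theorem ne_zero (hT : IsPMVertex T) (i : Fin t) : T i ≠ 0 :=
  left_ne_zero_of_mul_eq_one (hT.mul_self i)

theorem sprod_self (hT : IsPMVertex T) : sprod T T = t := by
  simp [sprod, hT.mul_self]

theorem exists_sub_eq_single (hX : IsPMVertex X) (hY : IsPMVertex Y) (h : hamming X Y = 1) :
    ∃ c, X - Y = Pi.single c (2 * X c) := by
  obtain ⟨c, hc⟩ := card_eq_one.1 h
  have ne_iff : ∀ i, X i ≠ Y i ↔ i = c := by simpa [Finset.ext_iff] using hc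
  refine ⟨c, funext fun i => ?_⟩
  by_cases hi : i = c
  · subst hi
    have hY_neg : Y i = -X i := by
      have := (ne_iff i).2 rfl
      rcases hX i with h | h <;> rcases hY i with h' | h' <;> simp_all
    simp [hY_neg, two_mul]
  · simpa [hi, sub_eq_zero] using mt (ne_iff i).1 hi

end IsPMVertex

namespace IsSymCycle

theorem apply_self (hD : IsSymCycle t D) : D t = -D 0 := by
  simpa using hD.symm 0 (Nat.zero_le _)

theorem exists_sub_succ_eq_single (hD : IsSymCycle t D) (k : ℕ) :
    ∃ c, D k - D (k + 1) = Pi.single c (2 * D k c) :=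
  (hD.vertex k).exists_sub_eq_single (hD.vertex (k + 1)) (hD.adj k)

/-- The coordinate in which the adjacent vertices `D^k` and `D^{k+1}` differ. -/
def flip (hD : IsSymCycle t D) (k : ℕ) : Fin t :=
  (hD.exists_sub_succ_eq_single k).choose

theorem sub_succ_eq_single_flip (hD : IsSymCycle t D) (k : ℕ) :
    D k - D (k + 1) = Pi.single (hD.flip k) (2 * D k (hD.flip k)) :=
  (hD.exists_sub_succ_eq_single k).choose_spec

theorem flip_surjective (hD : IsSymCycle t D) :
    Function.Surjective fun k : Fin t => hD.flip k := by
  intro c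
  have telescope : ∑ k ∈ range t, (D k - D (k + 1)) c = 2 * D 0 c := by
    rw [← Finset.sum_apply, sum_range_sub', hD.apply_self]
    simp [two_mul]
  obtain ⟨k, hk, hkc⟩ := exists_ne_zero_of_sum_ne_zero
    (telescope.trans_ne (mul_ne_zero two_ne_zero ((hD.vertex 0).ne_zero c)))
  refine ⟨⟨k, mem_range.1 hk⟩, ?_⟩
  by_contra hne
  exact hkc (by rw [hD.sub_succ_eq_single_flip, Pi.single_eq_of_ne' hne])

theorem flip_bijective (hD : IsSymCycle t D) :
    Function.Bijective fun k : Fin t => hD.flip k :=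
  Finite.surjective_iff_bijective.1 hD.flip_surjective

/-- The coefficient of the edge difference `D^k - D^{k+1}` in the expansion of `T` is
`hD.edgeCoeff T (k + 1)`. The index is shifted by one so that `hD.edgeCoeff T 0` can hold the
antiperiodic extension `a_{-1} = -a_{t-1}` of these coefficients. -/
def edgeCoeff (hD : IsSymCycle t D) (T : Vec t) : ℕ → ℝ
  | 0 => -(T (hD.flip (t - 1)) * D (t - 1) (hD.flip (t - 1)) / 2)
  | k + 1 => T (hD.flip k) * D k (hD.flip k) / 2

theorem edgeCoeff_self (hD : IsSymCycle t D) (T : Vec t) :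
    hD.edgeCoeff T t = -hD.edgeCoeff T 0 := by
  cases t with
  | zero => exact (hD.flip 0).elim0
  | succ n => simp [edgeCoeff]

theorem edgeCoeff_succ_smul_sub (hD : IsSymCycle t D) (T : Vec t) (k : ℕ) :
    hD.edgeCoeff T (k + 1) • (D k - D (k + 1)) = Pi.single (hD.flip k) (T (hD.flip k)) := by
  rw [hD.sub_succ_eq_single_flip, ← Pi.single_smul, edgeCoeff, smul_eq_mul]
  congr 1
  linear_combination T (hD.flip k) * (hD.vertex k).mul_self (hD.flip k)

theorem eq_sum_edgeCoeff (hD : IsSymCycle t D) (T : Vec t) :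
    T = ∑ i : Fin t, (hD.edgeCoeff T (i + 1) - hD.edgeCoeff T i) • D i := by
  have boundary : hD.edgeCoeff T t • D t = hD.edgeCoeff T 0 • D 0 := by
    rw [hD.edgeCoeff_self, hD.apply_self, neg_smul_neg]
  calc T = ∑ c, Pi.single c (T c) := (univ_sum_single T).symm
    _ = ∑ k : Fin t, Pi.single (hD.flip k) (T (hD.flip k)) :=
        (hD.flip_bijective.sum_comp fun c => Pi.single c (T c)).symm
    _ = ∑ k ∈ range t, hD.edgeCoeff T (k + 1) • (D k - D (k + 1)) := by
        simp only [edgeCoeff_succ_smul_sub, sum_range]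
    _ = ∑ i : Fin t, (hD.edgeCoeff T (i + 1) - hD.edgeCoeff T i) • D i := by
        rw [sum_range_smul_sub_succ boundary, sum_range]

theorem linearIndependent (hD : IsSymCycle t D) :
    LinearIndependent ℝ fun i : Fin t => D i := by
  refine linearIndependent_of_top_le_span_of_card_eq_finrank (fun T _ => ?_) (by simp)
  rw [hD.eq_sum_edgeCoeff T]
  exact sum_mem fun i _ => Submodule.smul_mem _ _ (Submodule.subset_span ⟨i, rfl⟩)

theorem edgeCoeff_eq_half_or_neg_half (hD : IsSymCycle t D) (hT : IsPMVertex T) (k : ℕ) :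
    hD.edgeCoeff T k = 1 / 2 ∨ hD.edgeCoeff T k = -(1 / 2) := by
  have sign (j : ℕ) : T (hD.flip j) * D j (hD.flip j) = 1 ∨
      T (hD.flip j) * D j (hD.flip j) = -1 := by
    rcases hT (hD.flip j) with h | h <;> rcases hD.vertex j (hD.flip j) with h' | h' <;>
      simp [h, h']
  cases k with
  | zero => rcases sign (t - 1) with h | h <;> simp [edgeCoeff, h, neg_div]
  | succ j => rcases sign j with h | h <;> simp [edgeCoeff, h, neg_div]

theorem isXVec_edgeCoeff (hD : IsSymCycle t D) (hT : IsPMVertex T) :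
    IsXVec t D T fun i => hD.edgeCoeff T (i + 1) - hD.edgeCoeff T i := by
  refine ⟨fun i => ?_, hD.eq_sum_edgeCoeff T⟩
  rcases hD.edgeCoeff_eq_half_or_neg_half hT i with h | h <;>
    rcases hD.edgeCoeff_eq_half_or_neg_half hT (i + 1) with h' | h' <;> norm_num [h, h']

theorem existsUnique_isXVec (hD : IsSymCycle t D) (hT : IsPMVertex T) :
    ∃! x : Fin t → ℝ, IsXVec t D T x :=
  ⟨_, hD.isXVec_edgeCoeff hT, fun _ hy => funext <|
    hD.linearIndependent.eq_coords_of_eq (hy.2.symm.trans (hD.eq_sum_edgeCoeff T))⟩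

theorem sum_VD {M : Type*} [AddCommMonoid M] (hD : IsSymCycle t D) (f : Vec t → M) :
    ∑ q ∈ VD t D, f q = ∑ i : Fin t, (f (D i) + f (-D i)) := by
  have injOn : Set.InjOn D (range (2 * t)) := fun k hk l hl =>
    hD.inj k l (mem_range.1 hk) (mem_range.1 hl)
  rw [VD, sum_image injOn, two_mul, sum_range_add, ← sum_add_distrib, sum_range]
  refine sum_congr rfl fun i _ => ?_
  rw [add_comm t, hD.symm i (by omega)]

open Classical in
theorem sum_eq_of_subset_VD (hD : IsSymCycle t D) (hQ : Q ⊆ VD t D) :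
    ∑ q ∈ Q, q =
      ∑ i : Fin t, ((if D i ∈ Q then 1 else 0) - (if -D i ∈ Q then 1 else 0) : ℝ) • D i := by
  calc ∑ q ∈ Q, q = ∑ q ∈ VD t D, if q ∈ Q then q else 0 := by
        rw [sum_ite_mem, inter_eq_right.2 hQ]
    _ = ∑ i : Fin t, ((if D i ∈ Q then D i else 0) + if -D i ∈ Q then -D i else 0) :=
        hD.sum_VD _
    _ = _ := by
        refine sum_congr rfl fun i _ => ?_
        split_ifs <;> simp

end IsSymCycle

open Classical in
/-- The set `Q(T,D)` of nonzero terms `x_i • D^{i-1}`, as a function of the coordinate vector `x`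
of `T`; the indices `i : Fin t` start at `0`. -/
def signedTerms (D : ℕ → Vec t) (x : Fin t → ℝ) : Finset (Vec t) :=
  (Finset.univ.filter fun i : Fin t => x i ≠ 0).image fun i => x i • D (i : ℕ)

namespace IsSymCycle

theorem sum_signedTerms (hD : IsSymCycle t D) (x : Fin t → ℝ) :
    ∑ q ∈ signedTerms D x, q = ∑ i : Fin t, x i • D i := by
  have injOn : Set.InjOn (fun i : Fin t => x i • D i) (univ.filter fun i => x i ≠ 0) :=
    fun i hi j _ => hD.linearIndependent.eq_of_smul_apply_eq_smul_apply _ _ _ _ (by simpa using hi)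
  rw [signedTerms, sum_image injOn]
  exact sum_filter_of_ne fun i _ => left_ne_zero_of_smul

theorem signedTerms_subset_VD (hD : IsSymCycle t D)
    (hx : ∀ i, x i = -1 ∨ x i = 0 ∨ x i = 1) : signedTerms D x ⊆ VD t D := by
  refine image_subset_iff.2 fun i hi => mem_image.2 ?_
  rcases hx i with h | h | h
  · exact ⟨i + t, by rw [mem_range]; omega, by simp [h, hD.symm i (by omega)]⟩
  · exact absurd h (mem_filter.1 hi).2
  · exact ⟨i, by rw [mem_range]; omega, by simp [h]⟩

theorem signedTerms_subset_of_sum_eq (hD : IsSymCycle t D) (hQ : Q ⊆ VD t D)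
    (hsum : ∑ q ∈ Q, q = ∑ i : Fin t, x i • D i) : signedTerms D x ⊆ Q := by
  classical
  have coords := hD.linearIndependent.eq_coords_of_eq
    (hsum.symm.trans (hD.sum_eq_of_subset_VD hQ))
  refine image_subset_iff.2 fun i hi => ?_
  have hxi : x i ≠ 0 := (mem_filter.1 hi).2
  rw [coords i] at hxi ⊢
  by_cases hpos : D i ∈ Q <;> by_cases hneg : -D i ∈ Q <;> simp_all

end IsSymCycle

namespace IsXVec

theorem sum_signedTerms (hx : IsXVec t D T x) (hD : IsSymCycle t D) :
    ∑ q ∈ signedTerms D x, q = T :=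
  (hD.sum_signedTerms x).trans hx.2.symm

theorem isMinDecomp_signedTerms (hx : IsXVec t D T x) (hD : IsSymCycle t D) :
    IsMinDecomp t D T (signedTerms D x) :=
  ⟨hD.signedTerms_subset_VD hx.1, hx.sum_signedTerms hD, fun _ hQ hsum hlt =>
    hlt.not_subset (hD.signedTerms_subset_of_sum_eq hQ (hsum.trans hx.2))⟩

theorem eq_signedTerms_of_isMinDecomp (hx : IsXVec t D T x) (hD : IsSymCycle t D)
    (hQ : IsMinDecomp t D T Q) : Q = signedTerms D x := by
  have hsub := hD.signedTerms_subset_of_sum_eq hQ.1 (hQ.2.1.trans hx.2)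
  have hmin := hQ.2.2 _ (hD.signedTerms_subset_VD hx.1) (hx.sum_signedTerms hD)
  exact ((hsub.eq_or_ssubset).resolve_right hmin).symm

theorem odd_card_signedTerms (hx : IsXVec t D T x) (hD : IsSymCycle t D) (hT : IsPMVertex T) :
    Odd #(signedTerms D x) := by
  have vertex : ∀ q ∈ signedTerms D x, IsPMVertex q := by
    intro q hq
    obtain ⟨k, -, rfl⟩ := mem_image.1 (hD.signedTerms_subset_VD hx.1 hq)
    exact hD.vertex k
  let c : Fin t := hD.flip 0
  refine odd_card_of_sum_eq_one_or_neg_one (fun q hq => vertex q hq c) ?_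
  rw [← Finset.sum_apply, hx.sum_signedTerms hD]
  exact hT c

theorem sum_sprod_signedTerms (hx : IsXVec t D T x) (hD : IsSymCycle t D) (hT : IsPMVertex T) :
    ∑ q ∈ signedTerms D x, sprod T q = t := by
  rw [← sprod_sum, hx.sum_signedTerms hD, hT.sprod_self]

end IsXVec

open Classical in
/-- for any symmetric cycle `D` in `H(t,2)` and any vertex `T` of `{1,-1}^t`
there is a unique `x ∈ {-1,0,1}^t` with `T = ∑ i, x i • D^{i-1}`; moreover the set
`Q(T,D) = {x_i • D^{i-1} : x_i ≠ 0}` is the unique inclusion-minimal subset of `V(D)`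
summing to `T`, it has odd cardinality, and `∑_{Q ∈ Q(T,D)} ⟨T,Q⟩ = t`. -/
theorem stmt0 (t : ℕ) (ht : 3 ≤ t) (D : ℕ → Vec t) (hD : IsSymCycle t D)
    (T : Vec t) (hT : IsPMVertex T) :
    (∃! x : Fin t → ℝ, IsXVec t D T x) ∧
    ∀ x : Fin t → ℝ, IsXVec t D T x →
      IsMinDecomp t D T
        ((Finset.univ.filter fun i : Fin t => x i ≠ 0).image fun i => x i • D (i : ℕ)) ∧
      (∀ Q' : Finset (Vec t), IsMinDecomp t D T Q' →
        Q' = (Finset.univ.filter fun i : Fin t => x i ≠ 0).image fun i => x i • D (i : ℕ)) ∧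
      Odd ((Finset.univ.filter fun i : Fin t => x i ≠ 0).image
        fun i => x i • D (i : ℕ)).card ∧
      (∑ q ∈ (Finset.univ.filter fun i : Fin t => x i ≠ 0).image
        fun i => x i • D (i : ℕ), sprod T q) = (t : ℝ) :=
  ⟨hD.existsUnique_isXVec hT, fun _ hx =>
    ⟨hx.isMinDecomp_signedTerms hD, fun _ => hx.eq_signedTerms_of_isMinDecomp hD,
      hx.odd_card_signedTerms hD hT, hx.sum_sprod_signedTerms hD hT⟩⟩
end
end

section
/- Let D be a symmetric cycle in the hypercube graph H(t,2) and let T be any vertex of {1,-1}^t. Then sum_{Q in Q(T,D)} |Q^-| = |T^-| + (1/2)(q(T)-1)*t; equivalently, q(T) = 1 - (2/t)|T^-| + (2/t) * sum_{Q in Q(T,D)} |Q^-|. -/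
open Finset

noncomputable section

/-!
The coordinate sum is a linear functional whose value at a vertex `T` of `{1,-1}^t` is `t - 2|T⁻|`.
Evaluating it on both sides of a decomposition `T = ∑ q` into vertices gives the relation between
the sizes of the negative parts.
-/

namespace IsPMVertex

variable {t : ℕ} {T : Vec t}

theorem sum_coords (hT : IsPMVertex T) : ∑ i, T i = (t : ℝ) - 2 * negCard T := by
  classical
  have coord_eq (i : Fin t) : T i = 1 - 2 * (if T i = -1 then 1 else 0) := by
    rcases hT i with h | h <;> rw [h] <;> norm_num
  calc ∑ i, T i = ∑ i, (1 - 2 * (if T i = -1 then (1 : ℝ) else 0)) :=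
        sum_congr rfl fun i _ ↦ coord_eq i
    _ = (t : ℝ) - 2 * negCard T := by
        rw [sum_sub_distrib, ← mul_sum, sum_boole]
        simp [negCard]

theorem sum_negCard_of_sum_eq {ι : Type*} {s : Finset ι} {v : ι → Vec t} (hT : IsPMVertex T)
    (hv : ∀ j ∈ s, IsPMVertex (v j)) (hsum : ∑ j ∈ s, v j = T) :
    ∑ j ∈ s, (negCard (v j) : ℝ) = negCard T + (1 / 2) * ((s.card : ℝ) - 1) * t := by
  have coord_sums : (t : ℝ) - 2 * negCard T = s.card * t - 2 * ∑ j ∈ s, (negCard (v j) : ℝ) :=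
    calc (t : ℝ) - 2 * negCard T = ∑ i, T i := hT.sum_coords.symm
      _ = ∑ i, ∑ j ∈ s, v j i := by simp only [← hsum, Finset.sum_apply]
      _ = ∑ j ∈ s, ∑ i, v j i := sum_comm
      _ = ∑ j ∈ s, ((t : ℝ) - 2 * negCard (v j)) :=
        sum_congr rfl fun j hj ↦ (hv j hj).sum_coords
      _ = s.card * t - 2 * ∑ j ∈ s, (negCard (v j) : ℝ) := by
        rw [sum_sub_distrib, sum_const, nsmul_eq_mul, mul_sum]
  linarith

end IsPMVertex

theorem IsSymCycle.isPMVertex_of_mem_VD {t : ℕ} {D : ℕ → Vec t} (hD : IsSymCycle t D)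
    {q : Vec t} (hq : q ∈ VD t D) : IsPMVertex q := by
  obtain ⟨k, -, rfl⟩ := mem_image.mp hq
  exact hD.vertex k

theorem stmt4_general {ι : Type*} {t : ℕ} (ht : t ≠ 0) {s : Finset ι} {v : ι → Vec t} {T : Vec t}
    (hT : IsPMVertex T) (hv : ∀ j ∈ s, IsPMVertex (v j)) (hsum : ∑ j ∈ s, v j = T) :
    (∑ j ∈ s, (negCard (v j) : ℝ)) = (negCard T : ℝ) + (1 / 2) * ((s.card : ℝ) - 1) * t ∧
    (s.card : ℝ) = 1 - (2 / (t : ℝ)) * (negCard T : ℝ) +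
      (2 / (t : ℝ)) * ∑ j ∈ s, (negCard (v j) : ℝ) := by
  have sum_negCard := hT.sum_negCard_of_sum_eq hv hsum
  refine ⟨sum_negCard, ?_⟩
  rw [sum_negCard]
  field_simp
  ring

/-- `∑_{Q ∈ Q(T,D)} |Q⁻| = |T⁻| + (1/2)(q(T)-1)t`, equivalently
`q(T) = 1 - (2/t)|T⁻| + (2/t) ∑_{Q ∈ Q(T,D)} |Q⁻|`. -/
theorem stmt4 (t : ℕ) (ht : 3 ≤ t) (D : ℕ → Vec t) (hD : IsSymCycle t D)
    (T : Vec t) (hT : IsPMVertex T)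
    (Q : Finset (Vec t)) (hQ : IsMinDecomp t D T Q) :
    (∑ q ∈ Q, (negCard q : ℝ)) = (negCard T : ℝ) + (1 / 2) * ((Q.card : ℝ) - 1) * t ∧
    (Q.card : ℝ) = 1 - (2 / (t : ℝ)) * (negCard T : ℝ) +
      (2 / (t : ℝ)) * ∑ q ∈ Q, (negCard q : ℝ) :=
  stmt4_general (by omega) hT (fun _ hq ↦ hD.isPMVertex_of_mem_VD (hQ.1 hq)) hQ.2.1
end
end

section
/- Let D be a symmetric cycle in the hypercube graph H(t,2) and let T' and T'' be any two vertices of {1,-1}^t. Then -d(T',T'') + sum over all pairs (Q',Q'') with Q' in Q(T',D) and Q'' in Q(T'',D) of d(Q',Q'') = (1/2)(q(T')*q(T'') - 1)*t. -/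
open Finset

noncomputable section

/-!
For sign vectors, `2 d(x, y) = t - ⟨x, y⟩`. Summing over all pairs of two families, bilinearity
collapses the scalar products into the scalar product of the two sums. If these sums are sign
vectors themselves, it is `t - 2 d` of the sums, so only the numbers of pairs remain.
-/

section

variable {n R : Type*} [Fintype n] [DecidableEq R]

theorem two_mul_ite_ne_eq_one_sub_mul [NonAssocRing R] {a b : R}
    (ha : a = 1 ∨ a = -1) (hb : b = 1 ∨ b = -1) :
    2 * (if a ≠ b then 1 else 0) = 1 - a * b := by
  by_cases h : a = b
  · rcases ha with rfl | rfl <;> simp [← h]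
  · have hab : a * b = -1 := by
      rcases ha with rfl | rfl <;> rcases hb with rfl | rfl <;> simp_all
    rw [if_pos h, hab, mul_one, sub_neg_eq_add, one_add_one_eq_two]

theorem two_mul_hammingDist_eq_card_sub_dotProduct [NonAssocRing R] {x y : n → R}
    (hx : ∀ i, x i = 1 ∨ x i = -1) (hy : ∀ i, y i = 1 ∨ y i = -1) :
    2 * (hammingDist x y : R) = Fintype.card n - x ⬝ᵥ y := by
  calc 2 * (hammingDist x y : R)
      = ∑ i, 2 * (if x i ≠ y i then (1 : R) else 0) := by
        rw [hammingDist, ← sum_boole, mul_sum]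
    _ = ∑ i, (1 - x i * y i) :=
        sum_congr rfl fun i _ => two_mul_ite_ne_eq_one_sub_mul (hx i) (hy i)
    _ = Fintype.card n - x ⬝ᵥ y := by
        rw [sum_sub_distrib, sum_const, card_univ, nsmul_one, dotProduct]

theorem stmt8_general [Ring R] {ι κ : Type*} {s : Finset ι} {u : Finset κ}
    {v : ι → n → R} {w : κ → n → R} {x y : n → R}
    (hx : ∀ k, x k = 1 ∨ x k = -1) (hy : ∀ k, y k = 1 ∨ y k = -1)
    (hv : ∀ i ∈ s, ∀ k, v i k = 1 ∨ v i k = -1) (hw : ∀ j ∈ u, ∀ k, w j k = 1 ∨ w j k = -1)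
    (hvx : ∑ i ∈ s, v i = x) (hwy : ∑ j ∈ u, w j = y) :
    2 * (-(hammingDist x y : R) + ∑ i ∈ s, ∑ j ∈ u, (hammingDist (v i) (w j) : R)) =
      ((#s : R) * #u - 1) * Fintype.card n := by
  have bilinear : ∑ i ∈ s, ∑ j ∈ u, v i ⬝ᵥ w j = x ⬝ᵥ y := by
    rw [← hvx, ← hwy, sum_dotProduct]
    simp only [dotProduct_sum]
  have sum_dist : 2 * ∑ i ∈ s, ∑ j ∈ u, (hammingDist (v i) (w j) : R) =
      #s * #u * Fintype.card n - x ⬝ᵥ y := by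
    calc 2 * ∑ i ∈ s, ∑ j ∈ u, (hammingDist (v i) (w j) : R)
        = ∑ i ∈ s, ∑ j ∈ u, ((Fintype.card n : R) - v i ⬝ᵥ w j) := by
          simp only [mul_sum]
          exact sum_congr rfl fun i hi => sum_congr rfl fun j hj =>
            two_mul_hammingDist_eq_card_sub_dotProduct (hv i hi) (hw j hj)
      _ = #s * #u * Fintype.card n - x ⬝ᵥ y := by
          simp only [sum_sub_distrib, bilinear, sum_const, nsmul_eq_mul, mul_assoc]
  rw [mul_add, mul_neg, two_mul_hammingDist_eq_card_sub_dotProduct hx hy, sum_dist,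
    sub_mul, one_mul]
  abel

end

theorem hamming_eq_hammingDist {t : ℕ} (X Y : Vec t) : hamming X Y = hammingDist X Y := by
  simp only [hamming, hammingDist]

/-- `-d(T',T'') + ∑_{Q' ∈ Q(T',D), Q'' ∈ Q(T'',D)} d(Q',Q'')
  = (1/2)(q(T') q(T'') - 1) t`. -/
theorem stmt8 (t : ℕ) (ht : 3 ≤ t) (D : ℕ → Vec t) (hD : IsSymCycle t D)
    (T₁ T₂ : Vec t) (hT₁ : IsPMVertex T₁) (hT₂ : IsPMVertex T₂)
    (Q₁ Q₂ : Finset (Vec t)) (hQ₁ : IsMinDecomp t D T₁ Q₁) (hQ₂ : IsMinDecomp t D T₂ Q₂) :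
    -(hamming T₁ T₂ : ℝ) + ∑ q₁ ∈ Q₁, ∑ q₂ ∈ Q₂, (hamming q₁ q₂ : ℝ) =
      (1 / 2) * ((Q₁.card : ℝ) * (Q₂.card : ℝ) - 1) * t := by
  have doubled := stmt8_general hT₁ hT₂ (fun _ hq => hD.isPMVertex_of_mem_VD (hQ₁.1 hq))
    (fun _ hq => hD.isPMVertex_of_mem_VD (hQ₂.1 hq)) hQ₁.2.1 hQ₂.2.1
  simp only [hamming_eq_hammingDist]
  linarith [Fintype.card_fin t ▸ doubled]
end
end

section
/- Let j', j'' be integers and ellcap, ell', ell'' odd integers in [t]. Consider the family F of ordered pairs (A,B) of subsets of [t] with |A| = j', |B| = j'', |A intersect B| > 0, max{j',j''} < |A union B| = t, q(A intersect B) = ellcap, q(A - B) = ell' and q(B - A) = ell''. Then: (i) the number of pairs (A,B) in F with {1,t} intersect A = {1} and {1,t} intersect B = {1,t} is Tm(theta,beta;(ellcap+1)/2,(ell'-1)/2,(ell''+1)/2) * c((ellcap+1)/2; j'+j''-t) * c((ell'-1)/2; t-j'') * c((ell''+1)/2; t-j'); (ii) the number with {1,t} intersect A = {1} and {1,t} intersect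 B = {t} is Tm(alpha,beta;(ellcap-1)/2,(ell'+1)/2,(ell''+1)/2) * c((ellcap-1)/2; j'+j''-t) * c((ell'+1)/2; t-j'') * c((ell''+1)/2; t-j'); (iii) the number with {1,t} intersect A = {1,t} intersect B = {1,t} is Tm(theta,theta;(ellcap+1)/2,(ell'-1)/2,(ell''-1)/2) * c((ellcap+1)/2; j'+j''-t) * c((ell'-1)/2; t-j'') * c((ell''-1)/2; t-j'); (iv) the number with {1,t} intersect A = {1,t} and {1,t} intersect B empty is Tm(alpha,alpha;(ellcap-1)/2,(ell'+1)/2,(ell''-1)/2) * c((ellcap-1)/2; j'+j''-t) * c((ell'+1)/2; t-j'') * c((ell''-1)/2; t-j'); (v) the number with {1,t} intersect A = {1,t} and {1,t} intersect B = {t} is Tm(alpha,theta;(ellcap+1)/2,(ell'+1)/2,(ell''-1)/2) * c((ellcap+1)/2; j'+j''-t) * c((ell'+1)/2; t-j'') * c((ell''-1)/2; t-j'). -/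
open Finset

noncomputable section

/-!
Code a covering pair `(A, B)` by the word over `{θ, α, β}` whose `i`-th letter tells whether `i`
lies in `A ∩ B`, `A - B` or `B - A`. The vectors `R^0, …, R^(t-1)` form a basis of `ℝ^t`, and the
coordinates of `T_S` in it are the halved jumps of `T_S` between consecutive elements of `[t]`,
together with `(T_S(1) + T_S(t)) / 2`. They lie in `{-1, 0, 1}`, so `q(S)` is the number of nonzero
ones: the number of boundaries of `S`, plus one if `1` and `t` are both in `S` or both outside it.
For the set `S` of positions of a letter, `q(S)` thus amounts to the number of runs of that letter,
once it is known whether the letter occurs at the two ends of the word. A word is the Smirnov word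
of its runs together with the lengths of those runs, which for each letter form a composition of
the number of its occurrences.
-/

/-! ### Words and their runs -/

/-- The number of compositions of `n` into `m` positive parts. Unlike `comp`, it
counts the empty composition of `0`. -/
def numCompositions : ℕ → ℕ → ℕ
  | 0, 0 => 1
  | 0, _ + 1 => 0
  | _ + 1, 0 => 0
  | m + 1, n + 1 => n.choose m

lemma numCompositions_zero_left {n : ℕ} (hn : n ≠ 0) : numCompositions 0 n = 0 := by
  cases n with
  | zero => contradiction
  | succ n => rfl

lemma numCompositions_zero_right {m : ℕ} (hm : m ≠ 0) : numCompositions m 0 = 0 := by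
  cases m with
  | zero => contradiction
  | succ m => rfl

lemma numCompositions_succ_succ (m n : ℕ) :
    numCompositions (m + 1) (n + 1) = numCompositions (m + 1) n + numCompositions m n := by
  cases n with
  | zero => cases m <;> simp [numCompositions]
  | succ n =>
    cases m with
    | zero => simp [numCompositions]
    | succ m => simp only [numCompositions, Nat.choose_succ_succ, add_comm]

lemma comp_natCast (m : ℕ) {n : ℕ} (hn : 0 < n) : comp m n = numCompositions m n := by
  obtain ⟨k, rfl⟩ := Nat.exists_eq_succ_of_ne_zero hn.ne'
  cases m <;> simp [comp, numCompositions]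

lemma comp_of_nonpos (m : ℕ) {z : ℤ} (hz : z ≤ 0) : comp m z = 0 :=
  if_neg fun h => by omega

section Words

variable {α : Type*}

lemma head?_destutter' (R : α → α → Prop) [DecidableRel R] (a : α) (l : List α) :
    (l.destutter' R a).head? = some a := by
  induction l with
  | nil => rfl
  | cons b l ih => rw [List.destutter'_cons]; split_ifs <;> simp [ih]

lemma head?_destutter (R : α → α → Prop) [DecidableRel R] (w : List α) :
    (w.destutter R).head? = w.head? := by
  cases w with
  | nil => rfl
  | cons a l => exact head?_destutter' R a l

variable [DecidableEq α]

lemma getLast?_destutter'_ne (a : α) (l : List α) :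
    (l.destutter' (· ≠ ·) a).getLast? = (a :: l).getLast? := by
  induction l generalizing a with
  | nil => rfl
  | cons b l ih =>
    rw [List.destutter'_cons, List.getLast?_cons_cons]
    split_ifs with h
    · rw [List.getLast?_cons, ih, List.getLast?_cons, Option.getD_some]
    · rw [not_not.1 h, ih]

lemma getLast?_destutter_ne (w : List α) : (w.destutter (· ≠ ·)).getLast? = w.getLast? := by
  cases w with
  | nil => rfl
  | cons a l => exact getLast?_destutter'_ne a l

lemma destutter_ne_cons_eq_cons_iff {a : α} {u v : List α} (hu : (a :: u).IsChain (· ≠ ·)) :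
    (a :: v).destutter (· ≠ ·) = a :: u ↔
      v.destutter (· ≠ ·) = a :: u ∨ v.destutter (· ≠ ·) = u := by
  cases v with
  | nil => simp [eq_comm]
  | cons b l =>
    have hhead : ((b :: l).destutter (· ≠ ·)).head? = some b := head?_destutter _ _
    rw [List.destutter_cons_cons]
    split_ifs with hab
    · have hne : (b :: l).destutter (· ≠ ·) ≠ a :: u := fun h => by
        rw [h] at hhead
        exact hab (Option.some.inj hhead)
      simp only [List.cons.injEq, true_and, List.destutter_cons'] at hne ⊢
      simp only [hne, false_or]
    · obtain rfl := not_not.1 hab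
      have hne : (a :: l).destutter (· ≠ ·) ≠ u := fun h => by
        rw [← h, List.destutter_cons'] at hu
        obtain ⟨r, hr⟩ := List.head?_eq_some_iff.1 hhead
        rw [List.destutter_cons'] at hr
        simp [hr] at hu
      simp only [List.destutter_cons'] at hne ⊢
      simp only [hne, or_false]

/-- The words over `α` in which every letter occurs as often as in `s`. -/
def wordsOf (s : Multiset α) : Finset (List α) :=
  s.lists.toFinset

lemma mem_wordsOf {s : Multiset α} {w : List α} : w ∈ wordsOf s ↔ (w : Multiset α) = s := by
  rw [wordsOf, Multiset.mem_toFinset, Multiset.mem_lists_iff, eq_comm]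
  rfl

/-- The words with letter content `s` whose sequence of runs is `u`. -/
def wordsWithRuns (s : Multiset α) (u : List α) : Finset (List α) :=
  {w ∈ wordsOf s | w.destutter (· ≠ ·) = u}

lemma mem_wordsWithRuns {s : Multiset α} {u w : List α} :
    w ∈ wordsWithRuns s u ↔ (w : Multiset α) = s ∧ w.destutter (· ≠ ·) = u := by
  rw [wordsWithRuns, mem_filter, mem_wordsOf]

lemma exists_eq_cons_of_mem_wordsWithRuns {a : α} {s : Multiset α} {u w : List α}
    (hw : w ∈ wordsWithRuns s (a :: u)) : ∃ v, w = a :: v := by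
  rw [← List.head?_eq_some_iff, ← head?_destutter (· ≠ ·), (mem_wordsWithRuns.1 hw).2,
    List.head?_cons]

lemma wordsWithRuns_cons_cons {a : α} {u : List α} (hu : (a :: u).IsChain (· ≠ ·))
    (s : Multiset α) :
    wordsWithRuns (a ::ₘ s) (a :: u) =
      (wordsWithRuns s (a :: u) ∪ wordsWithRuns s u).image (List.cons a) := by
  ext w
  simp only [mem_image, mem_union, mem_wordsWithRuns]
  constructor
  · intro hw
    obtain ⟨v, rfl⟩ := exists_eq_cons_of_mem_wordsWithRuns (mem_wordsWithRuns.2 hw)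
    rw [← Multiset.cons_coe, Multiset.cons_inj_right, destutter_ne_cons_eq_cons_iff hu] at hw
    exact ⟨v, by tauto, rfl⟩
  · rintro ⟨v, hv, rfl⟩
    rw [← Multiset.cons_coe, Multiset.cons_inj_right, destutter_ne_cons_eq_cons_iff hu]
    tauto

/-- The Smirnov words (no two adjacent letters agree) with letter content `m`, first letter `x` and
last letter `y`. -/
def smirnovWords (m : Multiset α) (x y : α) : Finset (List α) :=
  {u ∈ wordsOf m | u.IsChain (· ≠ ·) ∧ u.head? = some x ∧ u.getLast? = some y}

lemma mem_smirnovWords {m : Multiset α} {x y : α} {u : List α} :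
    u ∈ smirnovWords m x y ↔
      (u : Multiset α) = m ∧ u.IsChain (· ≠ ·) ∧ u.head? = some x ∧ u.getLast? = some y := by
  rw [smirnovWords, mem_filter, mem_wordsOf]

/-- The words with letter content `s`, first letter `x` and last letter `y` whose runs, one letter
for each run, have content `m`. -/
def wordsWithRunContent (s m : Multiset α) (x y : α) : Finset (List α) :=
  {w ∈ wordsOf s | (w.destutter (· ≠ ·) : Multiset α) = m ∧ w.head? = some x ∧ w.getLast? = some y}

lemma mem_wordsWithRunContent {s m : Multiset α} {x y : α} {w : List α} :
    w ∈ wordsWithRunContent s m x y ↔ (w : Multiset α) = s ∧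
      (w.destutter (· ≠ ·) : Multiset α) = m ∧ w.head? = some x ∧ w.getLast? = some y := by
  rw [wordsWithRunContent, mem_filter, mem_wordsOf]

lemma wordsWithRunContent_eq_biUnion (s m : Multiset α) (x y : α) :
    wordsWithRunContent s m x y = (smirnovWords m x y).biUnion (wordsWithRuns s) := by
  ext w
  simp only [mem_biUnion, mem_wordsWithRunContent, mem_smirnovWords, mem_wordsWithRuns]
  constructor
  · rintro ⟨hs, hm, hx, hy⟩
    exact ⟨_, ⟨hm, w.isChain_destutter _, (head?_destutter _ w).trans hx,
      (getLast?_destutter_ne w).trans hy⟩, hs, rfl⟩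
  · rintro ⟨_, ⟨hm, -, hx, hy⟩, hs, rfl⟩
    exact ⟨hs, hm, (head?_destutter _ w).symm.trans hx, (getLast?_destutter_ne w).symm.trans hy⟩

variable [Fintype α]

lemma prod_numCompositions_cons (a : α) (u : List α) (s : Multiset α) :
    ∏ b, numCompositions ((a :: u).count b) ((a ::ₘ s).count b) =
      ∏ b, numCompositions ((a :: u).count b) (s.count b) +
        ∏ b, numCompositions (u.count b) (s.count b) := by
  refine (Finset.prod_add_prod_eq (mem_univ a) ?_ ?_ ?_).symm
  · simp only [List.count_cons_self, Multiset.count_cons_self, numCompositions_succ_succ]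
  all_goals
    intro b _ hb
    simp only [List.count_cons_of_ne hb.symm, Multiset.count_cons_of_ne hb]

-- Deleting the first letter of a word either shortens its first run or removes that run.
theorem card_wordsWithRuns (s : Multiset α) {u : List α} (hu : u.IsChain (· ≠ ·)) :
    #(wordsWithRuns s u) = ∏ a, numCompositions (u.count a) (s.count a) := by
  induction s using Multiset.strongInductionOn generalizing u with
  | ih s ih =>
  cases u with
  | nil =>
    rcases s.empty_or_exists_mem with rfl | ⟨a, ha⟩
    · have hsingle : wordsWithRuns (0 : Multiset α) [] = {[]} := by
        ext w
        simp [mem_wordsWithRuns]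
      simp [hsingle, numCompositions]
    · have hempty : wordsWithRuns s [] = ∅ := eq_empty_of_forall_notMem fun w hw => by
        obtain ⟨rfl, hw⟩ := mem_wordsWithRuns.1 hw
        simp_all
      rw [hempty, card_empty, prod_eq_zero (mem_univ a)]
      exact numCompositions_zero_left (Multiset.count_ne_zero.2 ha)
  | cons a u =>
    by_cases ha : a ∈ s
    · obtain ⟨s, rfl⟩ := Multiset.exists_cons_of_mem ha
      have hdisj : Disjoint (wordsWithRuns s (a :: u)) (wordsWithRuns s u) :=
        disjoint_left.2 fun w hw hw' => List.cons_ne_self a u <|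
          (mem_wordsWithRuns.1 hw).2.symm.trans (mem_wordsWithRuns.1 hw').2
      rw [wordsWithRuns_cons_cons hu, card_image_of_injective _ (List.cons_injective),
        card_union_of_disjoint hdisj, ih s (Multiset.lt_cons_self s a) hu,
        ih s (Multiset.lt_cons_self s a) (u := u) hu.tail, prod_numCompositions_cons]
    · have hempty : wordsWithRuns s (a :: u) = ∅ := eq_empty_of_forall_notMem fun w hw => by
        obtain ⟨v, rfl⟩ := exists_eq_cons_of_mem_wordsWithRuns hw
        obtain ⟨rfl, -⟩ := mem_wordsWithRuns.1 hw
        simp at ha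
      rw [hempty, card_empty, prod_eq_zero (mem_univ a)]
      rw [Multiset.count_eq_zero_of_notMem ha]
      exact numCompositions_zero_right (List.count_pos_iff.2 List.mem_cons_self).ne'

theorem card_wordsWithRunContent (s m : Multiset α) (x y : α) :
    #(wordsWithRunContent s m x y) =
      #(smirnovWords m x y) * ∏ a, numCompositions (m.count a) (s.count a) := by
  rw [wordsWithRunContent_eq_biUnion, card_biUnion]
  · refine sum_const_nat fun u hu => ?_
    obtain ⟨rfl, hchain, -⟩ := mem_smirnovWords.1 hu
    simpa only [Multiset.coe_count] using card_wordsWithRuns s hchain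
  · exact fun u _ u' _ hne => disjoint_left.2 fun w hw hw' =>
      hne ((mem_wordsWithRuns.1 hw).2.symm.trans (mem_wordsWithRuns.1 hw').2)

end Words

lemma tm_eq_card_smirnovWords (m : Multiset (Fin 3)) (x y : Fin 3) :
    Tm x y (m.count 0) (m.count 1) (m.count 2) = #(smirnovWords m x y) := by
  rw [Tm, ← Set.ncard_coe_finset]
  congr 1
  ext u
  simp only [mem_coe, mem_smirnovWords, Multiset.ext, Multiset.coe_count, Fin.forall_fin_succ,
    Set.mem_ofPred_eq, Fin.succ_zero_eq_one, Fin.succ_one_eq_two, IsEmpty.forall_iff, and_true]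
  tauto

section Boundaries

variable {α : Type*} [DecidableEq α]

-- A run has two ends, each of which is either an end of the word or a boundary between letters.
lemma two_mul_count_destutter_ofFn (a : α) {n : ℕ} (f : Fin (n + 1) → α) :
    2 * ((List.ofFn f).destutter (· ≠ ·)).count a =
      #{i : Fin n | ¬(f i.succ = a ↔ f i.castSucc = a)} +
        ((if f 0 = a then 1 else 0) + if f (Fin.last n) = a then 1 else 0) := by
  induction n with
  | zero => simp [List.count_singleton, ← two_mul]
  | succ n ih =>
    have ih := ih (fun i => f i.succ)
    rw [List.ofFn_succ, List.destutter_cons'] at ih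
    have hcons : 2 * ((List.ofFn f).destutter (· ≠ ·)).count a =
        2 * (((List.ofFn fun i : Fin n => f i.succ.succ).destutter' (· ≠ ·) (f 1)).count a) +
          if f 0 ≠ f 1 ∧ f 0 = a then 2 else 0 := by
      rw [List.ofFn_succ, List.ofFn_succ, List.destutter_cons_cons]
      by_cases h : f 0 = f 1 <;> by_cases h₀ : f 0 = a <;> simp_all [mul_add]
    have hbdry : #{i : Fin (n + 1) | ¬(f i.succ = a ↔ f i.castSucc = a)} =
        (if f 1 = a ↔ f 0 = a then 0 else 1) +
          #{i : Fin n | ¬(f i.succ.succ = a ↔ f i.castSucc.succ = a)} := by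
      rw [Fin.card_filter_univ_succ']
      by_cases h₀ : f 0 = a <;> by_cases h₁ : f 1 = a <;> simp [h₀, h₁]
    rw [hcons, hbdry]
    simp only [Fin.succ_zero_eq_one, Fin.succ_last, Nat.succ_eq_add_one] at ih
    rw [ih]
    by_cases h₀ : f 0 = a <;> by_cases h₁ : f 1 = a <;> grind

end Boundaries

/-! ### Minimal decompositions -/

section SignedFamily

variable {ι E : Type*} [AddCommGroup E] [Module ℝ E] {v : ι → E}

lemma smul_eq_smul_iff_of_linearIndependent (hv : LinearIndependent ℝ v) {i j : ι} {x y : ℝ}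
    (hx : x ≠ 0) : x • v i = y • v j ↔ i = j ∧ x = y := by
  refine ⟨fun h => ?_, by rintro ⟨rfl, rfl⟩; rfl⟩
  have hsingle : Finsupp.single i x = Finsupp.single j y :=
    hv (by simpa only [Finsupp.linearCombination_single] using h)
  simpa [Finsupp.single_eq_single_iff, hx] using hsingle

lemma injOn_smul_of_linearIndependent (hv : LinearIndependent ℝ v) (x : ι → ℝ) :
    Set.InjOn (fun i => x i • v i) {i | x i ≠ 0} := fun _ hi _ _ h =>
  ((smul_eq_smul_iff_of_linearIndependent hv hi).1 h).1

variable [Fintype ι] [DecidableEq E]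

/-- The vectors `±v i`: for `v i = D^i` these form the vertex set of the symmetric cycle `D`. -/
def signedRange (v : ι → E) : Finset E :=
  univ.image v ∪ univ.image fun i => -v i

/-- The nonzero terms of the sum `∑ i, x i • v i`. With `x = x(T,D)` and `v i = D^i` this is the
set `Q(T,D)`. -/
def nonzeroTerms (v : ι → E) (x : ι → ℝ) : Finset E :=
  image (fun i => x i • v i) {i | x i ≠ 0}

lemma sum_eq_sum_indicator_smul (hv : LinearIndependent ℝ v) {Q : Finset E}
    (hQ : Q ⊆ signedRange v) :
    ∑ q ∈ Q, q = ∑ i, (((if v i ∈ Q then 1 else 0) - if -v i ∈ Q then 1 else 0 : ℝ)) • v i := by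
  have hdisj : Disjoint (univ.image v) (univ.image fun i => -v i) := by
    simp only [disjoint_left, mem_image, mem_univ, true_and, not_exists]
    rintro _ ⟨i, rfl⟩ j hij
    have h := (smul_eq_smul_iff_of_linearIndependent hv (i := j) (j := i) (x := -1) (y := 1)
      (by norm_num)).1 (by simpa using hij)
    norm_num at h
  calc ∑ q ∈ Q, q = ∑ q ∈ signedRange v, if q ∈ Q then q else 0 := by
        rw [sum_ite_mem, inter_eq_right.2 hQ]
    _ = (∑ i, if v i ∈ Q then v i else 0) + ∑ i, if -v i ∈ Q then -v i else 0 := by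
        rw [signedRange, sum_union hdisj, sum_image hv.injective.injOn,
          sum_image fun i _ j _ h => hv.injective (neg_injective h)]
    _ = _ := by
        rw [← sum_add_distrib]
        refine sum_congr rfl fun i _ => ?_
        split_ifs <;> simp

variable {x : ι → ℝ}

lemma card_nonzeroTerms (hv : LinearIndependent ℝ v) : #(nonzeroTerms v x) = #{i | x i ≠ 0} :=
  card_image_of_injOn (by simpa using injOn_smul_of_linearIndependent hv x)

lemma sum_nonzeroTerms (hv : LinearIndependent ℝ v) :
    ∑ q ∈ nonzeroTerms v x, q = ∑ i, x i • v i := by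
  rw [nonzeroTerms, sum_image (by simpa using injOn_smul_of_linearIndependent hv x)]
  exact sum_filter_of_ne fun i _ h hx => h (by rw [hx, zero_smul])

lemma nonzeroTerms_subset_signedRange (hx : ∀ i, x i = -1 ∨ x i = 0 ∨ x i = 1) :
    nonzeroTerms v x ⊆ signedRange v := by
  intro q hq
  obtain ⟨i, hi, rfl⟩ := mem_image.1 hq
  rcases hx i with h | h | h
  · exact mem_union_right _ (mem_image.2 ⟨i, mem_univ i, by simp [h]⟩)
  · exact absurd h (mem_filter.1 hi).2
  · exact mem_union_left _ (mem_image.2 ⟨i, mem_univ i, by simp [h]⟩)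

-- The coefficient of `v i` in `∑ q ∈ Q, q` can only be `±1` if `±v i` is a member of `Q`.
lemma nonzeroTerms_subset (hv : LinearIndependent ℝ v) (hx : ∀ i, x i = -1 ∨ x i = 0 ∨ x i = 1)
    {Q : Finset E} (hQ : Q ⊆ signedRange v) (hsum : ∑ q ∈ Q, q = ∑ i, x i • v i) :
    nonzeroTerms v x ⊆ Q := by
  rw [sum_eq_sum_indicator_smul hv hQ] at hsum
  have hx_eq := linearIndependent_iff_injective_fintypeLinearCombination.1 hv hsum
  intro q hq
  obtain ⟨i, hi, rfl⟩ := mem_image.1 hq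
  have hcoeff := congrFun hx_eq i
  rcases hx i with h | h | h
  · rw [h, neg_one_smul]
    grind
  · exact absurd h (mem_filter.1 hi).2
  · rw [h, one_smul]
    grind

end SignedFamily

theorem isMinDecomp_iff_of_isXVec {t : ℕ} {D : ℕ → Vec t} (hsymm : ∀ k < t, D (k + t) = -D k)
    (hli : LinearIndependent ℝ fun k : Fin t => D k) {T : Vec t} {x : Fin t → ℝ}
    (hx : IsXVec t D T x) {Q : Finset (Vec t)} :
    IsMinDecomp t D T Q ↔ Q = nonzeroTerms (fun k : Fin t => D k) x := by
  have hVD : VD t D = signedRange fun k : Fin t => D k := by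
    ext q
    simp only [VD, signedRange, mem_image, mem_range, mem_union, mem_univ, true_and]
    constructor
    · rintro ⟨k, hk, rfl⟩
      rcases lt_or_ge k t with h | h
      · exact Or.inl ⟨⟨k, h⟩, rfl⟩
      · obtain ⟨l, rfl⟩ := Nat.exists_eq_add_of_le' h
        exact Or.inr ⟨⟨l, by omega⟩, (hsymm l (by omega)).symm⟩
    · rintro (⟨k, rfl⟩ | ⟨k, rfl⟩)
      · exact ⟨k, by omega, rfl⟩
      · exact ⟨k + t, by omega, hsymm k k.isLt⟩
  have hsum := (sum_nonzeroTerms (x := x) hli).trans hx.2.symm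
  have hleast : ∀ Q ⊆ VD t D, ∑ q ∈ Q, q = T → nonzeroTerms (fun k : Fin t => D k) x ⊆ Q :=
    fun Q hQ hQT => nonzeroTerms_subset hli hx.1 (hVD ▸ hQ) (hQT.trans hx.2)
  have hmem : nonzeroTerms (fun k : Fin t => D k) x ⊆ VD t D :=
    hVD ▸ nonzeroTerms_subset_signedRange hx.1
  constructor
  · rintro ⟨hQ, hQT, hmin⟩
    by_contra hne
    exact hmin _ hmem hsum ((hleast Q hQ hQT).ssubset_of_ne (Ne.symm hne))
  · rintro rfl
    exact ⟨hmem, hsum, fun Q hQ hQT h => h.2 (hleast Q hQ hQT)⟩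

theorem exists_isMinDecomp_card_iff {t : ℕ} {D : ℕ → Vec t} (hsymm : ∀ k < t, D (k + t) = -D k)
    (hli : LinearIndependent ℝ fun k : Fin t => D k) {T : Vec t} {x : Fin t → ℝ}
    (hx : IsXVec t D T x) {ℓ : ℕ} :
    (∃ Q, IsMinDecomp t D T Q ∧ #Q = ℓ) ↔ #{k | x k ≠ 0} = ℓ := by
  simp only [isMinDecomp_iff_of_isXVec hsymm hli hx, exists_eq_left, card_nonzeroTerms hli]

/-! ### The distinguished symmetric cycle -/

lemma Rcyc_of_lt {t k : ℕ} (hk : k < t) : Rcyc t k = Rvec t k := by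
  simp [Rcyc, Nat.mod_eq_of_lt (show k < 2 * t by omega), hk]

lemma Rcyc_add_self {t k : ℕ} (hk : k < t) : Rcyc t (k + t) = -Rcyc t k := by
  rw [Rcyc_of_lt hk]
  simp [Rcyc, Nat.mod_eq_of_lt (show k + t < 2 * t by omega)]

lemma Rcyc_apply {t : ℕ} (k i : Fin t) : Rcyc t k i = if i < k then -1 else 1 := by
  rw [Rcyc_of_lt k.isLt]
  rfl

section Coordinates

variable {n : ℕ}

/-- The map sending a vector of `ℝ^(n+1)` to its coordinates with respect to the basis
`(R^0, …, R^n)`. -/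
def rcycCoord : Vec (n + 1) →ₗ[ℝ] Vec (n + 1) where
  toFun T := Fin.cons ((T 0 + T (Fin.last n)) / 2) fun i => (T i.succ - T i.castSucc) / 2
  map_add' T T' := by
    funext k
    cases k using Fin.cases <;> simp only [Fin.cons_zero, Fin.cons_succ, Pi.add_apply] <;> ring
  map_smul' c T := by
    funext k
    cases k using Fin.cases <;>
      simp only [Fin.cons_zero, Fin.cons_succ, Pi.smul_apply, smul_eq_mul, RingHom.id_apply] <;>
      ring

lemma rcycCoord_zero (T : Vec (n + 1)) : rcycCoord T 0 = (T 0 + T (Fin.last n)) / 2 := rfl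

lemma rcycCoord_succ (T : Vec (n + 1)) (i : Fin n) :
    rcycCoord T i.succ = (T i.succ - T i.castSucc) / 2 := rfl

-- `R^k` changes sign only between the coordinates `k - 1` and `k`, and `R^0` is the only one of
-- these vectors whose first and last coordinates agree.
lemma rcycCoord_Rcyc (k : Fin (n + 1)) : rcycCoord (Rcyc (n + 1) k) = Pi.single k 1 := by
  funext i
  cases i using Fin.cases with
  | zero =>
    rw [rcycCoord_zero, Rcyc_apply, Rcyc_apply, if_neg (Fin.le_last k).not_gt, Pi.single_apply]
    by_cases hk : k = 0
    · simp [hk]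
    · simp [Fin.pos_iff_ne_zero, hk, Ne.symm hk]
  | succ i =>
    rw [rcycCoord_succ, Rcyc_apply, Rcyc_apply, Pi.single_apply]
    have hsucc : i.succ = k ↔ i.castSucc < k ∧ ¬i.succ < k := by
      simp only [Fin.ext_iff, Fin.lt_def, Fin.val_succ, Fin.val_castSucc]
      omega
    have hlt : i.succ < k → i.castSucc < k := i.castSucc_lt_succ.trans
    split_ifs <;> grind

lemma rcycCoord_sum_smul_Rcyc (y : Fin (n + 1) → ℝ) :
    rcycCoord (∑ k : Fin (n + 1), y k • Rcyc (n + 1) k) = y := by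
  simp only [map_sum, map_smul, rcycCoord_Rcyc]
  exact (pi_eq_sum_univ' y).symm

lemma rcycCoord_injective : Function.Injective (rcycCoord (n := n)) := by
  intro T T' h
  have hzero : T 0 + T (Fin.last n) = T' 0 + T' (Fin.last n) := by
    have := congrFun h 0
    simp only [rcycCoord_zero] at this
    linarith
  have hsucc (i : Fin n) : T i.succ - T i.castSucc = T' i.succ - T' i.castSucc := by
    have := congrFun h i.succ
    simp only [rcycCoord_succ] at this
    linarith
  have hconst (i : Fin (n + 1)) : T i - T' i = T 0 - T' 0 := by
    induction i using Fin.induction with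
    | zero => rfl
    | succ i ih => linarith [hsucc i]
  funext i
  linarith [hconst i, hconst (Fin.last n)]

lemma sum_rcycCoord_smul_Rcyc (T : Vec (n + 1)) :
    ∑ k : Fin (n + 1), rcycCoord T k • Rcyc (n + 1) k = T :=
  rcycCoord_injective (rcycCoord_sum_smul_Rcyc _)

lemma linearIndependent_Rcyc (n : ℕ) :
    LinearIndependent ℝ fun k : Fin (n + 1) => Rcyc (n + 1) k :=
  linearIndependent_iff_injective_fintypeLinearCombination.2 <|
    Function.LeftInverse.injective (g := rcycCoord) rcycCoord_sum_smul_Rcyc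

lemma isXVec_rcycCoord_topeOf (A : Finset (Fin (n + 1))) :
    IsXVec (n + 1) (Rcyc (n + 1)) (topeOf (n + 1) A) (rcycCoord (topeOf (n + 1) A)) := by
  refine ⟨fun k => ?_, (sum_rcycCoord_smul_Rcyc _).symm⟩
  cases k using Fin.cases <;> simp only [rcycCoord_zero, rcycCoord_succ, topeOf] <;>
    split_ifs <;> norm_num

theorem qIs_iff (A : Finset (Fin (n + 1))) (ℓ : ℕ) :
    qIs (n + 1) A ℓ ↔ (if 0 ∈ A ↔ Fin.last n ∈ A then 1 else 0) +
      #{i : Fin n | ¬(i.succ ∈ A ↔ i.castSucc ∈ A)} = ℓ := by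
  have hzero : rcycCoord (topeOf (n + 1) A) 0 ≠ 0 ↔ (0 ∈ A ↔ Fin.last n ∈ A) := by
    simp only [rcycCoord_zero, topeOf]
    split_ifs <;> simp [*]
  have hsucc (i : Fin n) :
      rcycCoord (topeOf (n + 1) A) i.succ ≠ 0 ↔ ¬(i.succ ∈ A ↔ i.castSucc ∈ A) := by
    simp only [rcycCoord_succ, topeOf]
    split_ifs <;> norm_num [*]
  rw [qIs, exists_isMinDecomp_card_iff (fun _ => Rcyc_add_self) (linearIndependent_Rcyc n)
    (isXVec_rcycCoord_topeOf A), Fin.card_filter_univ_succ']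
  simp only [hzero, hsucc]

end Coordinates

lemma qIs_fiber_iff {α : Type*} [DecidableEq α] {n : ℕ} (f : Fin (n + 1) → α) (a : α) (ℓ : ℕ) :
    qIs (n + 1) {i | f i = a} ℓ ↔
      2 * ((List.ofFn f).destutter (· ≠ ·)).count a + 1 =
        ℓ + if f 0 = a ∨ f (Fin.last n) = a then 2 else 0 := by
  rw [qIs_iff, two_mul_count_destutter_ofFn]
  simp only [mem_filter, mem_univ, true_and]
  by_cases h₀ : f 0 = a <;> by_cases h₁ : f (Fin.last n) = a <;> grind

section WordCount

variable {α : Type*} [DecidableEq α] {n : ℕ} {s m : Multiset α} {x y : α} {ℓ : α → ℕ}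

lemma ofFn_mem_wordsWithRunContent_iff
    (hℓ : ∀ a, 2 * m.count a + 1 = ℓ a + if x = a ∨ y = a then 2 else 0) (f : Fin (n + 1) → α) :
    List.ofFn f ∈ wordsWithRunContent s m x y ↔ univ.val.map f = s ∧
      (∀ a, qIs (n + 1) {i | f i = a} (ℓ a)) ∧ f 0 = x ∧ f (Fin.last n) = y := by
  have hhead : (List.ofFn f).head? = some (f 0) := by rw [List.ofFn_succ, List.head?_cons]
  have hlast : (List.ofFn f).getLast? = some (f (Fin.last n)) := by
    rw [List.getLast?_eq_getElem?, List.length_ofFn, List.getElem?_ofFn]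
    simp [Fin.last]
  rw [mem_wordsWithRunContent, hhead, hlast, Option.some_inj, Option.some_inj, ← Fin.univ_val_map,
    Multiset.ext (t := m)]
  refine and_congr_right fun _ => and_congr_left ?_
  rintro ⟨rfl, rfl⟩
  refine forall_congr' fun a => ?_
  rw [qIs_fiber_iff, Multiset.coe_count]
  have := hℓ a
  omega

theorem ncard_qIs_fiber [Fintype α] (hs : s.card = n + 1)
    (hℓ : ∀ a, 2 * m.count a + 1 = ℓ a + if x = a ∨ y = a then 2 else 0) :
    {f : Fin (n + 1) → α | univ.val.map f = s ∧ (∀ a, qIs (n + 1) {i | f i = a} (ℓ a)) ∧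
      f 0 = x ∧ f (Fin.last n) = y}.ncard =
      #(smirnovWords m x y) * ∏ a, numCompositions (m.count a) (s.count a) := by
  simp only [← ofFn_mem_wordsWithRunContent_iff hℓ]
  rw [← card_wordsWithRunContent, ← Set.ncard_coe_finset,
    ← Set.ncard_image_of_injective _ List.ofFn_injective]
  congr 1
  refine Set.image_preimage_eq_of_subset (f := List.ofFn) fun w hw => ?_
  have hlen : w.length = n + 1 := by
    rw [← hs, ← (mem_wordsWithRunContent.1 hw).1, Multiset.coe_card]
  exact ⟨fun i => w.get (i.cast hlen.symm), by rw [← List.ofFn_congr hlen]; exact List.ofFn_get w⟩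

end WordCount

/-! ### Covering pairs as ternary words -/

section Pairs

variable {t : ℕ}

/-- The covering pair `(A, B)` coded by a word over `(θ, α, β) = (0, 1, 2)`: the letters `θ`, `α`
and `β` mark the elements of `A ∩ B`, `A - B` and `B - A`. -/
def pairOfWord (f : Fin t → Fin 3) : Finset (Fin t) × Finset (Fin t) :=
  (univ.filter fun i => f i ≠ 2, univ.filter fun i => f i ≠ 1)

lemma mem_fst_pairOfWord {f : Fin t → Fin 3} {i : Fin t} : i ∈ (pairOfWord f).1 ↔ f i ≠ 2 := by
  simp [pairOfWord]

lemma mem_snd_pairOfWord {f : Fin t → Fin 3} {i : Fin t} : i ∈ (pairOfWord f).2 ↔ f i ≠ 1 := by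
  simp [pairOfWord]

lemma fin_three_eq_iff {a b : Fin 3} : a = b ↔ (a ≠ 2 ↔ b ≠ 2) ∧ (a ≠ 1 ↔ b ≠ 1) := by
  decide +revert

lemma pairOfWord_injective : Function.Injective (pairOfWord (t := t)) := by
  intro f g h
  funext i
  rw [fin_three_eq_iff, ← mem_fst_pairOfWord, ← mem_snd_pairOfWord, h, mem_fst_pairOfWord,
    mem_snd_pairOfWord]
  exact ⟨Iff.rfl, Iff.rfl⟩

lemma pairOfWord_union (f : Fin t → Fin 3) : (pairOfWord f).1 ∪ (pairOfWord f).2 = univ := by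
  ext i
  simp only [mem_union, mem_fst_pairOfWord, mem_snd_pairOfWord, mem_univ, iff_true]
  omega

lemma pairOfWord_inter (f : Fin t → Fin 3) :
    (pairOfWord f).1 ∩ (pairOfWord f).2 = ({i | f i = 0} : Finset (Fin t)) := by
  ext i
  simp only [mem_inter, mem_fst_pairOfWord, mem_snd_pairOfWord, mem_filter_univ]
  omega

lemma pairOfWord_fst_sdiff_snd (f : Fin t → Fin 3) :
    (pairOfWord f).1 \ (pairOfWord f).2 = ({i | f i = 1} : Finset (Fin t)) := by
  ext i
  simp only [mem_sdiff, mem_fst_pairOfWord, mem_snd_pairOfWord, mem_filter_univ]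
  omega

lemma pairOfWord_snd_sdiff_fst (f : Fin t → Fin 3) :
    (pairOfWord f).2 \ (pairOfWord f).1 = ({i | f i = 2} : Finset (Fin t)) := by
  ext i
  simp only [mem_sdiff, mem_fst_pairOfWord, mem_snd_pairOfWord, mem_filter_univ]
  omega

lemma exists_pairOfWord_eq {p : Finset (Fin t) × Finset (Fin t)} (hp : p.1 ∪ p.2 = univ) :
    ∃ f, pairOfWord f = p := by
  refine ⟨fun i => if i ∉ p.1 then 2 else if i ∉ p.2 then 1 else 0, Prod.ext ?_ ?_⟩ <;> ext i <;>
    have hi : i ∈ p.1 ∨ i ∈ p.2 := mem_union.1 (hp ▸ mem_univ i)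
  · rw [mem_fst_pairOfWord]
    split_ifs <;> simp_all
  · rw [mem_snd_pairOfWord]
    split_ifs <;> simp_all

end Pairs

/-- The intersecting Sperner pairs `(A, B)` covering `[n+1]` with the prescribed cardinalities and
`q`-values whose words (see `pairOfWord`) have first letter `x` and last letter `y`. -/
def markedCovers (n j' j'' ℓcap ℓ' ℓ'' : ℕ) (x y : Fin 3) :
    Set (Finset (Fin (n + 1)) × Finset (Fin (n + 1))) :=
  {p | #p.1 = j' ∧ #p.2 = j'' ∧ 0 < #(p.1 ∩ p.2) ∧ j' < n + 1 ∧ j'' < n + 1 ∧ p.1 ∪ p.2 = univ ∧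
    qIs (n + 1) (p.1 ∩ p.2) ℓcap ∧ qIs (n + 1) (p.1 \ p.2) ℓ' ∧ qIs (n + 1) (p.2 \ p.1) ℓ'' ∧
    ((0 ∈ p.1 ↔ x ≠ 2) ∧ (0 ∈ p.2 ↔ x ≠ 1)) ∧
    ((Fin.last n ∈ p.1 ↔ y ≠ 2) ∧ (Fin.last n ∈ p.2 ↔ y ≠ 1))}

section MarkedCovers

variable {n : ℕ} {x y : Fin 3}

lemma pairOfWord_mem_markedCovers_iff {s : Multiset (Fin 3)} (hs : s.card = n + 1)
    (hpos : ∀ a, a ∈ s) (ℓ : Fin 3 → ℕ) (f : Fin (n + 1) → Fin 3) :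
    pairOfWord f ∈ markedCovers n (s.count 0 + s.count 1) (s.count 0 + s.count 2)
        (ℓ 0) (ℓ 1) (ℓ 2) x y ↔
      univ.val.map f = s ∧ (∀ a, qIs (n + 1) {i | f i = a} (ℓ a)) ∧
        f 0 = x ∧ f (Fin.last n) = y := by
  have hcount (a : Fin 3) : (univ.val.map f).count a = #{i | f i = a} := by
    rw [Multiset.count_map]
    simp only [eq_comm, card_def, filter_val]
  have hfst : #(pairOfWord f).1 = #{i | f i = 0} + #{i | f i = 1} := by
    rw [← card_inter_add_card_sdiff _ (pairOfWord f).2, pairOfWord_inter, pairOfWord_fst_sdiff_snd]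
  have hsnd : #(pairOfWord f).2 = #{i | f i = 0} + #{i | f i = 2} := by
    rw [← card_inter_add_card_sdiff _ (pairOfWord f).1, inter_comm, pairOfWord_inter,
      pairOfWord_snd_sdiff_fst]
  have hcard : #{i | f i = 0} + #{i | f i = 1} + #{i | f i = 2} = n + 1 := by
    rw [← Fin.sum_univ_three fun a => #{i | f i = a}]
    simpa using (card_eq_sum_card_fiberwise (s := univ) (t := univ) (f := f) (by simp)).symm
  have hscard : s.count 0 + s.count 1 + s.count 2 = n + 1 := by
    rw [← hs, ← Multiset.sum_count_eq_card (s := univ) (by simp), Fin.sum_univ_three]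
  simp only [markedCovers, Set.mem_ofPred_eq, pairOfWord_union, pairOfWord_inter,
    pairOfWord_fst_sdiff_snd, pairOfWord_snd_sdiff_fst, mem_fst_pairOfWord, mem_snd_pairOfWord,
    ← fin_three_eq_iff, hfst, hsnd, Multiset.ext, hcount, Fin.forall_fin_succ, true_and,
    Fin.succ_zero_eq_one, Fin.succ_one_eq_two, IsEmpty.forall_iff, and_true]
  have h₀ := Multiset.count_pos.2 (hpos 0)
  have h₁ := Multiset.count_pos.2 (hpos 1)
  have h₂ := Multiset.count_pos.2 (hpos 2)
  constructor <;> grind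

lemma ncard_markedCovers_of_pos {s m : Multiset (Fin 3)} (hs : s.card = n + 1)
    (hpos : ∀ a, a ∈ s) {ℓ : Fin 3 → ℕ}
    (hℓ : ∀ a, 2 * m.count a + 1 = ℓ a + if x = a ∨ y = a then 2 else 0) :
    (markedCovers n (s.count 0 + s.count 1) (s.count 0 + s.count 2)
      (ℓ 0) (ℓ 1) (ℓ 2) x y).ncard =
      Tm x y (m.count 0) (m.count 1) (m.count 2) *
        ∏ a, numCompositions (m.count a) (s.count a) := by
  rw [tm_eq_card_smirnovWords, ← ncard_qIs_fiber hs hℓ,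
    ← Set.ncard_image_of_injective _ pairOfWord_injective]
  simp only [← pairOfWord_mem_markedCovers_iff hs hpos]
  exact congrArg Set.ncard (Set.image_preimage_eq_of_subset fun p hp =>
    exists_pairOfWord_eq hp.2.2.2.2.2.1).symm

lemma exists_multiset_fin_three_count (a b c : ℕ) :
    ∃ s : Multiset (Fin 3), s.count 0 = a ∧ s.count 1 = b ∧ s.count 2 = c :=
  ⟨.replicate a 0 + .replicate b 1 + .replicate c 2, by simp [Multiset.count_replicate]⟩

lemma lt_of_mem_markedCovers {j' j'' ℓcap ℓ' ℓ'' : ℕ}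
    {p : Finset (Fin (n + 1)) × Finset (Fin (n + 1))}
    (hp : p ∈ markedCovers n j' j'' ℓcap ℓ' ℓ'' x y) :
    n + 1 < j' + j'' ∧ j' < n + 1 ∧ j'' < n + 1 := by
  obtain ⟨rfl, rfl, hinter, hfst, hsnd, hunion, -⟩ := hp
  have := card_union_add_card_inter p.1 p.2
  rw [hunion, card_univ, Fintype.card_fin] at this
  omega

theorem ncard_markedCovers {j' j'' ℓcap ℓ' ℓ'' k i j : ℕ}
    (hk : 2 * k + 1 = ℓcap + if x = 0 ∨ y = 0 then 2 else 0)
    (hi : 2 * i + 1 = ℓ' + if x = 1 ∨ y = 1 then 2 else 0)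
    (hj : 2 * j + 1 = ℓ'' + if x = 2 ∨ y = 2 then 2 else 0) :
    (markedCovers n j' j'' ℓcap ℓ' ℓ'' x y).ncard =
      Tm x y k i j * comp k ((j' : ℤ) + j'' - (n + 1 : ℕ)) * comp i ((n + 1 : ℕ) - (j'' : ℤ)) *
        comp j ((n + 1 : ℕ) - (j' : ℤ)) := by
  by_cases hlt : n + 1 < j' + j'' ∧ j' < n + 1 ∧ j'' < n + 1
  · obtain ⟨s, hs₀, hs₁, hs₂⟩ :=
      exists_multiset_fin_three_count (j' + j'' - (n + 1)) (n + 1 - j'') (n + 1 - j')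
    obtain ⟨m, rfl, rfl, rfl⟩ := exists_multiset_fin_three_count k i j
    have hs : s.card = n + 1 := by
      rw [← Multiset.sum_count_eq_card (s := univ) (by simp), Fin.sum_univ_three]
      omega
    have hpos (a : Fin 3) : a ∈ s := by
      rw [← Multiset.count_pos]
      fin_cases a <;> simp only [Fin.zero_eta, Fin.mk_one, Fin.reduceFinMk] <;> omega
    have hℓ (a : Fin 3) :
        2 * m.count a + 1 = ![ℓcap, ℓ', ℓ''] a + if x = a ∨ y = a then 2 else 0 := by
      fin_cases a <;> assumption
    have hN₀ : (j' : ℤ) + j'' - (n + 1 : ℕ) = s.count 0 := by omega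
    have hN₁ : (n + 1 : ℕ) - (j'' : ℤ) = s.count 1 := by omega
    have hN₂ : (n + 1 : ℕ) - (j' : ℤ) = s.count 2 := by omega
    obtain rfl : j' = s.count 0 + s.count 1 := by omega
    obtain rfl : j'' = s.count 0 + s.count 2 := by omega
    rw [hN₀, hN₁, hN₂, comp_natCast _ (Multiset.count_pos.2 (hpos 0)),
      comp_natCast _ (Multiset.count_pos.2 (hpos 1)),
      comp_natCast _ (Multiset.count_pos.2 (hpos 2)), mul_assoc, mul_assoc,
      ← mul_assoc (numCompositions _ _),
      ← Fin.prod_univ_three fun a => numCompositions (m.count a) (s.count a)]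
    exact ncard_markedCovers_of_pos hs hpos hℓ
  · have hempty : markedCovers n j' j'' ℓcap ℓ' ℓ'' x y = ∅ :=
      Set.eq_empty_of_forall_notMem fun p hp => hlt (lt_of_mem_markedCovers hp)
    rw [hempty, Set.ncard_empty, eq_comm]
    simp only [mul_eq_zero]
    by_cases h₀ : n + 1 < j' + j''
    · by_cases h₁ : j'' < n + 1
      · exact Or.inr (comp_of_nonpos _ (by omega))
      · exact Or.inl (Or.inr (comp_of_nonpos _ (by omega)))
    · exact Or.inl (Or.inl (Or.inr (comp_of_nonpos _ (by omega))))

end MarkedCovers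

section Trace

variable {ι : Type*} [DecidableEq ι] {a b : ι} {A : Finset ι}

lemma pair_inter_eq_self_iff : {a, b} ∩ A = {a, b} ↔ a ∈ A ∧ b ∈ A := by
  rw [inter_eq_left, insert_subset_iff, singleton_subset_iff]

lemma pair_inter_eq_empty_iff : {a, b} ∩ A = ∅ ↔ a ∉ A ∧ b ∉ A := by
  rw [← disjoint_iff_inter_eq_empty, disjoint_insert_left, disjoint_singleton_left]

lemma pair_inter_eq_left_iff (hab : a ≠ b) : {a, b} ∩ A = {a} ↔ a ∈ A ∧ b ∉ A := by
  simp only [Finset.ext_iff, mem_inter, mem_insert, mem_singleton]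
  grind

lemma pair_inter_eq_right_iff (hab : a ≠ b) : {a, b} ∩ A = {b} ↔ a ∉ A ∧ b ∈ A := by
  rw [pair_comm, pair_inter_eq_left_iff hab.symm, and_comm]

end Trace

/-- counts of ordered two-member intersecting Sperner families covering `[t]`,
refined by `q(A∩B)`, `q(A-B)`, `q(B-A)` and the traces of `A` and `B` on `{1,t}`. -/
theorem stmt14 (t j' j'' ℓcap ℓ' ℓ'' : ℕ) (ht : 3 ≤ t)
    (hoddc : Odd ℓcap) (hlec : ℓcap ≤ t)
    (hodd' : Odd ℓ') (hle' : ℓ' ≤ t) (hodd'' : Odd ℓ'') (hle'' : ℓ'' ≤ t)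
    (S1 S2 S3 S4 S5 : Set (Finset (Fin t) × Finset (Fin t)))
    (hS1 : S1 = { p : Finset (Fin t) × Finset (Fin t) | p.1.card = j' ∧ p.2.card = j'' ∧ 0 < (p.1 ∩ p.2).card ∧ j' < t ∧ j'' < t ∧ p.1 ∪ p.2 = Finset.univ ∧ qIs t (p.1 ∩ p.2) ℓcap ∧ qIs t (p.1 \ p.2) ℓ' ∧ qIs t (p.2 \ p.1) ℓ'' ∧ ({⟨0, by omega⟩, ⟨t - 1, by omega⟩} : Finset (Fin t)) ∩ p.1 = ({⟨0, by omega⟩} : Finset (Fin t)) ∧ ({⟨0, by omega⟩, ⟨t - 1, by omega⟩} : Finset (Fin t)) ∩ p.2 = ({⟨0, by omega⟩, ⟨t - 1, by omega⟩} : Finset (Fin t)) })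
    (hS2 : S2 = { p : Finset (Fin t) × Finset (Fin t) | p.1.card = j' ∧ p.2.card = j'' ∧ 0 < (p.1 ∩ p.2).card ∧ j' < t ∧ j'' < t ∧ p.1 ∪ p.2 = Finset.univ ∧ qIs t (p.1 ∩ p.2) ℓcap ∧ qIs t (p.1 \ p.2) ℓ' ∧ qIs t (p.2 \ p.1) ℓ'' ∧ ({⟨0, by omega⟩, ⟨t - 1, by omega⟩} : Finset (Fin t)) ∩ p.1 = ({⟨0, by omega⟩} : Finset (Fin t)) ∧ ({⟨0, by omega⟩, ⟨t - 1, by omega⟩} : Finset (Fin t)) ∩ p.2 = ({⟨t - 1, by omega⟩} : Finset (Fin t)) })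
    (hS3 : S3 = { p : Finset (Fin t) × Finset (Fin t) | p.1.card = j' ∧ p.2.card = j'' ∧ 0 < (p.1 ∩ p.2).card ∧ j' < t ∧ j'' < t ∧ p.1 ∪ p.2 = Finset.univ ∧ qIs t (p.1 ∩ p.2) ℓcap ∧ qIs t (p.1 \ p.2) ℓ' ∧ qIs t (p.2 \ p.1) ℓ'' ∧ ({⟨0, by omega⟩, ⟨t - 1, by omega⟩} : Finset (Fin t)) ∩ p.1 = ({⟨0, by omega⟩, ⟨t - 1, by omega⟩} : Finset (Fin t)) ∧ ({⟨0, by omega⟩, ⟨t - 1, by omega⟩} : Finset (Fin t)) ∩ p.2 = ({⟨0, by omega⟩, ⟨t - 1, by omega⟩} : Finset (Fin t)) })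
    (hS4 : S4 = { p : Finset (Fin t) × Finset (Fin t) | p.1.card = j' ∧ p.2.card = j'' ∧ 0 < (p.1 ∩ p.2).card ∧ j' < t ∧ j'' < t ∧ p.1 ∪ p.2 = Finset.univ ∧ qIs t (p.1 ∩ p.2) ℓcap ∧ qIs t (p.1 \ p.2) ℓ' ∧ qIs t (p.2 \ p.1) ℓ'' ∧ ({⟨0, by omega⟩, ⟨t - 1, by omega⟩} : Finset (Fin t)) ∩ p.1 = ({⟨0, by omega⟩, ⟨t - 1, by omega⟩} : Finset (Fin t)) ∧ ({⟨0, by omega⟩, ⟨t - 1, by omega⟩} : Finset (Fin t)) ∩ p.2 = ∅ })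
    (hS5 : S5 = { p : Finset (Fin t) × Finset (Fin t) | p.1.card = j' ∧ p.2.card = j'' ∧ 0 < (p.1 ∩ p.2).card ∧ j' < t ∧ j'' < t ∧ p.1 ∪ p.2 = Finset.univ ∧ qIs t (p.1 ∩ p.2) ℓcap ∧ qIs t (p.1 \ p.2) ℓ' ∧ qIs t (p.2 \ p.1) ℓ'' ∧ ({⟨0, by omega⟩, ⟨t - 1, by omega⟩} : Finset (Fin t)) ∩ p.1 = ({⟨0, by omega⟩, ⟨t - 1, by omega⟩} : Finset (Fin t)) ∧ ({⟨0, by omega⟩, ⟨t - 1, by omega⟩} : Finset (Fin t)) ∩ p.2 = ({⟨t - 1, by omega⟩} : Finset (Fin t)) })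
    : S1.ncard = Tm 0 2 ((ℓcap + 1) / 2) ((ℓ' - 1) / 2) ((ℓ'' + 1) / 2) * comp ((ℓcap + 1) / 2) ((j' : ℤ) + (j'' : ℤ) - (t : ℤ)) * comp ((ℓ' - 1) / 2) ((t : ℤ) - (j'' : ℤ)) * comp ((ℓ'' + 1) / 2) ((t : ℤ) - (j' : ℤ)) ∧
      S2.ncard = Tm 1 2 ((ℓcap - 1) / 2) ((ℓ' + 1) / 2) ((ℓ'' + 1) / 2) * comp ((ℓcap - 1) / 2) ((j' : ℤ) + (j'' : ℤ) - (t : ℤ)) * comp ((ℓ' + 1) / 2) ((t : ℤ) - (j'' : ℤ)) * comp ((ℓ'' + 1) / 2) ((t : ℤ) - (j' : ℤ)) ∧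
      S3.ncard = Tm 0 0 ((ℓcap + 1) / 2) ((ℓ' - 1) / 2) ((ℓ'' - 1) / 2) * comp ((ℓcap + 1) / 2) ((j' : ℤ) + (j'' : ℤ) - (t : ℤ)) * comp ((ℓ' - 1) / 2) ((t : ℤ) - (j'' : ℤ)) * comp ((ℓ'' - 1) / 2) ((t : ℤ) - (j' : ℤ)) ∧
      S4.ncard = Tm 1 1 ((ℓcap - 1) / 2) ((ℓ' + 1) / 2) ((ℓ'' - 1) / 2) * comp ((ℓcap - 1) / 2) ((j' : ℤ) + (j'' : ℤ) - (t : ℤ)) * comp ((ℓ' + 1) / 2) ((t : ℤ) - (j'' : ℤ)) * comp ((ℓ'' - 1) / 2) ((t : ℤ) - (j' : ℤ)) ∧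
      S5.ncard = Tm 1 0 ((ℓcap + 1) / 2) ((ℓ' + 1) / 2) ((ℓ'' - 1) / 2) * comp ((ℓcap + 1) / 2) ((j' : ℤ) + (j'' : ℤ) - (t : ℤ)) * comp ((ℓ' + 1) / 2) ((t : ℤ) - (j'' : ℤ)) * comp ((ℓ'' - 1) / 2) ((t : ℤ) - (j' : ℤ)) := by
  obtain ⟨n, rfl⟩ : ∃ n, t = n + 1 := ⟨t - 1, by omega⟩
  obtain ⟨c, rfl⟩ := hoddc
  obtain ⟨c', rfl⟩ := hodd'
  obtain ⟨c'', rfl⟩ := hodd''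
  have hne : (0 : Fin (n + 1)) ≠ Fin.last n := Fin.ne_of_val_ne (show 0 ≠ n by omega)
  have hzero : (⟨0, by omega⟩ : Fin (n + 1)) = 0 := rfl
  have hlast : (⟨n + 1 - 1, by omega⟩ : Fin (n + 1)) = Fin.last n := rfl
  let F := markedCovers n j' j'' (2 * c + 1) (2 * c' + 1) (2 * c'' + 1)
  obtain ⟨h₁, h₂, h₃, h₄, h₅⟩ :
      S1 = F 0 2 ∧ S2 = F 1 2 ∧ S3 = F 0 0 ∧ S4 = F 1 1 ∧ S5 = F 1 0 := by
    subst hS1 hS2 hS3 hS4 hS5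
    simp only [hzero, hlast, pair_inter_eq_self_iff, pair_inter_eq_empty_iff,
      pair_inter_eq_left_iff hne, pair_inter_eq_right_iff hne]
    refine ⟨?_, ?_, ?_, ?_, ?_⟩ <;> ext p <;>
      simp only [F, markedCovers, Set.mem_ofPred_eq] <;> grind
  rw [h₁, h₂, h₃, h₄, h₅]
  refine ⟨ncard_markedCovers ?_ ?_ ?_, ncard_markedCovers ?_ ?_ ?_, ncard_markedCovers ?_ ?_ ?_,
    ncard_markedCovers ?_ ?_ ?_, ncard_markedCovers ?_ ?_ ?_⟩ <;> grind
end
end
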